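/- For p=3 and partitions λ=(λ₁≥λ₂≥λ₃), μ=(μ₁≥μ₂≥μ₃) with μ₁ ≤ λ₁ (so that paths exist for large boards), and any f with 0 ≤ f ≤ λ₂+λ₃, the partial sum c(λ,μ;f) = Σ det M(i,j,k), taken over all (i,j,k) with 0 ≤ k ≤ λ₂, 0 ≤ i ≤ k, 0 ≤ j ≤ λ₃ and j+k = f, is nonnegative, where M(i,j,k) is the 3×3 matrix with rows [C(λ₁-k, μ_c-(c-1)-k)]_c, [C(λ₂-j, μ_c+1-(c-1)+i-j)]_c, [C(λ₃, μ_c+2-(c-1)+(k-i)+j)]_c for columns c=1,2,3. -/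

import Mathlib

/-- Binomial coefficient on integers, equal to `0` when `k < 0` or `k > n`. -/
def ichoose (n k : ℤ) : ℤ :=
  if 0 ≤ k ∧ k ≤ n then (Nat.choose n.toNat k.toNat : ℤ) else 0

/-- The matrix `M(i,j,k)` of the `p = 3` setting. -/
def M3 (lam1 lam2 lam3 mu1 mu2 mu3 i j k : ℤ) : Matrix (Fin 3) (Fin 3) ℤ :=
  !![ichoose (lam1 - k) (mu1 - k),
     ichoose (lam1 - k) (mu2 - 1 - k),
     ichoose (lam1 - k) (mu3 - 2 - k);
     ichoose (lam2 - j) (mu1 + 1 + i - j),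
     ichoose (lam2 - j) (mu2 + i - j),
     ichoose (lam2 - j) (mu3 - 1 + i - j);
     ichoose lam3 (mu1 + 2 + (k - i) + j),
     ichoose lam3 (mu2 + 1 + (k - i) + j),
     ichoose lam3 (mu3 + (k - i) + j)]

/-- The coefficient sequence of the Laurent polynomial `x ^ p * (1 + x) ^ n`. -/
def binomRow (p n e : ℤ) : ℤ := ichoose n (e - p)

/-- The `3 × 3` minor of the rows `u`, `v`, `w` in the columns `e₁`, `e₂`, `e₃`. -/
def minor3 (e₁ e₂ e₃ : ℤ) (u v w : ℤ → ℤ) : ℤ :=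
  u e₁ * (v e₂ * w e₃ - v e₃ * w e₂) - u e₂ * (v e₁ * w e₃ - v e₃ * w e₁)
    + u e₃ * (v e₁ * w e₂ - v e₂ * w e₁)

section minor3

variable (e₁ e₂ e₃ : ℤ) (u u' v v' w w' : ℤ → ℤ)

theorem minor3_add_left :
    minor3 e₁ e₂ e₃ (u + u') v w = minor3 e₁ e₂ e₃ u v w + minor3 e₁ e₂ e₃ u' v w := by
  simp only [minor3, Pi.add_apply]; ring

theorem minor3_add_mid :
    minor3 e₁ e₂ e₃ u (v + v') w = minor3 e₁ e₂ e₃ u v w + minor3 e₁ e₂ e₃ u v' w := by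
  simp only [minor3, Pi.add_apply]; ring

theorem minor3_add_right :
    minor3 e₁ e₂ e₃ u v (w + w') = minor3 e₁ e₂ e₃ u v w + minor3 e₁ e₂ e₃ u v w' := by
  simp only [minor3, Pi.add_apply]; ring

theorem minor3_swap_left : minor3 e₁ e₂ e₃ v u w = -minor3 e₁ e₂ e₃ u v w := by
  simp only [minor3]; ring

theorem minor3_swap_right : minor3 e₁ e₂ e₃ u w v = -minor3 e₁ e₂ e₃ u v w := by
  simp only [minor3]; ring

theorem minor3_self_left : minor3 e₁ e₂ e₃ u u w = 0 := by
  simp only [minor3]; ring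

theorem minor3_self_right : minor3 e₁ e₂ e₃ u v v = 0 := by
  simp only [minor3]; ring

end minor3

/-- Pascal's rule, as `(1 + x) ^ n = (1 + x) ^ (n - 1) + x * (1 + x) ^ (n - 1)`. -/
theorem binomRow_pascal (p n : ℤ) (hn : 1 ≤ n) :
    binomRow p n = binomRow p (n - 1) + binomRow (p + 1) (n - 1) := by
  funext e
  simp only [binomRow, Pi.add_apply]
  obtain ⟨m, rfl⟩ : ∃ m : ℕ, n = m + 1 := ⟨(n - 1).toNat, by omega⟩
  obtain ⟨t, ht⟩ : ∃ t, t = e - p := ⟨_, rfl⟩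
  rw [show e - (p + 1) = t - 1 by omega, ← ht, show (m : ℤ) + 1 - 1 = m by ring]
  unfold ichoose
  rcases lt_trichotomy t 0 with h | h | h
  · rw [if_neg (by omega), if_neg (by omega), if_neg (by omega)]; rfl
  · subst h
    rw [if_pos (by omega), if_pos (by omega), if_neg (by omega)]
    simp
  · obtain ⟨s, rfl⟩ : ∃ s : ℕ, t = s + 1 := ⟨(t - 1).toNat, by omega⟩
    rw [show ((m : ℤ) + 1).toNat = m + 1 by omega, show ((s : ℤ) + 1).toNat = s + 1 by omega,
      show ((s : ℤ) + 1 - 1).toNat = s by omega, Int.toNat_natCast, Nat.choose_succ_succ]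
    by_cases h₁ : s + 1 ≤ m
    · rw [if_pos (by omega), if_pos (by omega), if_pos (by omega)]; push_cast; ring
    · by_cases h₂ : s ≤ m
      · rw [if_pos (by omega), if_neg (by omega), if_pos (by omega),
          Nat.choose_eq_zero_of_lt (show m < s + 1 by omega)]
        push_cast; ring
      · rw [if_neg (by omega), if_neg (by omega), if_neg (by omega)]; rfl

theorem binomRow_zero (p e : ℤ) : binomRow p 0 e = if e = p then 1 else 0 := by
  unfold binomRow ichoose
  by_cases h : e = p
  · simp [h]
  · rw [if_neg (by omega), if_neg h]

/-- Rows whose supports `[p, p + n]` weakly decrease at both ends have a nonnegative minor. -/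
theorem minor3_binomRow_nonneg {e₁ e₂ e₃ : ℤ} (h₁₂ : e₂ < e₁) (h₂₃ : e₃ < e₂)
    {p₁ n₁ p₂ n₂ p₃ n₃ : ℤ} (hn₁ : 0 ≤ n₁) (hn₂ : 0 ≤ n₂) (hn₃ : 0 ≤ n₃)
    (hp₁₂ : p₂ ≤ p₁) (hp₂₃ : p₃ ≤ p₂) (ht₁₂ : p₂ + n₂ ≤ p₁ + n₁) (ht₂₃ : p₃ + n₃ ≤ p₂ + n₂) :
    0 ≤ minor3 e₁ e₂ e₃ (binomRow p₁ n₁) (binomRow p₂ n₂) (binomRow p₃ n₃) := by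
  obtain ⟨N, hN⟩ : ∃ N : ℕ, n₁ + n₂ + n₃ ≤ N := ⟨(n₁ + n₂ + n₃).toNat, by omega⟩
  induction N generalizing p₁ n₁ p₂ n₂ p₃ n₃ with
  | zero =>
    obtain ⟨rfl, rfl, rfl⟩ : n₁ = 0 ∧ n₂ = 0 ∧ n₃ = 0 := by omega
    simp only [minor3, binomRow_zero]
    by_cases a₁ : e₁ = p₁
    · have a₂ : e₂ ≠ p₁ := by omega
      have a₃ : e₃ ≠ p₁ := by omega
      rw [if_pos a₁, if_neg a₂, if_neg a₃]
      by_cases b₃ : e₃ = p₂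
      · have c₂ : e₂ ≠ p₃ := by omega
        rw [if_neg c₂]; split_ifs <;> simp
      · rw [if_neg b₃]; split_ifs <;> simp
    · rcases lt_or_gt_of_ne a₁ with lt | gt
      · simp [a₁, show e₂ ≠ p₁ by omega, show e₃ ≠ p₁ by omega]
      · simp [a₁, show e₁ ≠ p₂ by omega, show e₁ ≠ p₃ by omega]
  | succ N ih =>
    by_cases m₁ : 1 ≤ n₁ ∧ n₂ ≤ n₁ ∧ n₃ ≤ n₁
    · by_cases heq : p₁ = p₂ ∧ n₁ = n₂
      · rw [heq.1, heq.2, minor3_self_left]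
      · rw [binomRow_pascal p₁ n₁ m₁.1, minor3_add_left]
        apply add_nonneg <;> apply ih <;> omega
    by_cases m₂ : 1 ≤ n₂ ∧ n₁ < n₂ ∧ n₃ ≤ n₂
    · by_cases heq : p₂ = p₃ ∧ n₂ = n₃
      · rw [heq.1, heq.2, minor3_self_right]
      · rw [binomRow_pascal p₂ n₂ m₂.1, minor3_add_mid]
        apply add_nonneg <;> apply ih <;> omega
    by_cases m₃ : 1 ≤ n₃
    · rw [binomRow_pascal p₃ n₃ m₃, minor3_add_right]
      apply add_nonneg <;> apply ih <;> omega
    · apply ih <;> omega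

theorem sum_Icc_int_reflect (F : ℤ → ℤ) (c a b : ℤ) :
    ∑ i ∈ Finset.Icc a b, F i = ∑ p ∈ Finset.Icc (c - b) (c - a), F (c - p) := by
  refine Finset.sum_nbij' (fun i => c - i) (fun i => c - i) ?_ ?_ ?_ ?_ ?_ <;>
    intro i hi <;> simp only [Finset.mem_Icc, sub_sub_cancel] at * <;> omega

theorem sum_Icc_int_shift (F : ℤ → ℤ) (a b : ℤ) :
    ∑ p ∈ Finset.Icc a b, F (p + 1) = ∑ p ∈ Finset.Icc (a + 1) (b + 1), F p := by
  refine Finset.sum_nbij' (fun i => i + 1) (fun i => i - 1) ?_ ?_ ?_ ?_ ?_ <;>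
    intro i hi <;> simp only [Finset.mem_Icc] at * <;> omega

theorem sum_Icc_int_succ_top (F : ℤ → ℤ) {a b : ℤ} (h : a ≤ b + 1) :
    ∑ p ∈ Finset.Icc a (b + 1), F p = ∑ p ∈ Finset.Icc a b, F p + F (b + 1) := by
  have : Finset.Icc a (b + 1) = insert (b + 1) (Finset.Icc a b) := by
    ext x; simp only [Finset.mem_Icc, Finset.mem_insert]; omega
  rw [this, Finset.sum_insert (by simp), add_comm]

theorem sum_Icc_int_eq_zero_of_antisymm (F : ℤ → ℤ) (a b : ℤ)
    (h : ∀ p, F (a + b - p) = -F p) : ∑ p ∈ Finset.Icc a b, F p = 0 := by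
  have := sum_Icc_int_reflect F (a + b) a b
  simp only [h, Finset.sum_neg_distrib, add_sub_cancel_right, add_sub_cancel_left] at this
  omega

section window

variable {e₁ e₂ e₃ : ℤ}

/-- Exchanging the initial exponents of the first two rows, whose degrees are `D + d` and `D`. -/
theorem sum_exchange_left_nonneg (h₁₂ : e₂ < e₁) (h₂₃ : e₃ < e₂) {D c m : ℤ} (hm : 0 ≤ m)
    (hcm : c + m ≤ D) (d : ℕ) (a b : ℤ) (hb : b ≤ D) (hc : c ≤ a) :
    0 ≤ ∑ p ∈ Finset.Icc a b, minor3 e₁ e₂ e₃ (binomRow p (D + d - p))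
      (binomRow (a + b - p) (D - (a + b - p))) (binomRow c m) := by
  obtain ⟨L, hL⟩ : ∃ L : ℕ, b - a + 1 ≤ L := ⟨(b - a + 1).toNat, by omega⟩
  induction L generalizing d a with
  | zero => rw [Finset.Icc_eq_empty (by omega), Finset.sum_empty]
  | succ L ihL =>
    rcases lt_or_ge b a with hab | hab
    · rw [Finset.Icc_eq_empty (by omega), Finset.sum_empty]
    induction d with
    | zero =>
      refine (sum_Icc_int_eq_zero_of_antisymm _ a b fun p => ?_).ge
      rw [minor3_swap_left]
      simp
    | succ d ihd =>
      have step : ∀ p ∈ Finset.Icc a b,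
          minor3 e₁ e₂ e₃ (binomRow p (D + (d + 1 : ℕ) - p))
            (binomRow (a + b - p) (D - (a + b - p))) (binomRow c m) =
          minor3 e₁ e₂ e₃ (binomRow p (D + d - p))
            (binomRow (a + b - p) (D - (a + b - p))) (binomRow c m) +
          minor3 e₁ e₂ e₃ (binomRow (p + 1) (D + (d + 1 : ℕ) - (p + 1)))
            (binomRow (a + 1 + b - (p + 1)) (D - (a + 1 + b - (p + 1)))) (binomRow c m) := by
        intro p hp
        rw [Finset.mem_Icc] at hp
        rw [binomRow_pascal p _ (by omega), minor3_add_left]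
        push_cast
        ring_nf
      rw [Finset.sum_congr rfl step, Finset.sum_add_distrib,
        sum_Icc_int_shift (fun p => minor3 e₁ e₂ e₃ (binomRow p (D + (d + 1 : ℕ) - p))
          (binomRow (a + 1 + b - p) (D - (a + 1 + b - p))) (binomRow c m)),
        sum_Icc_int_succ_top _ (by omega)]
      refine add_nonneg ihd (add_nonneg (ihL _ _ (by omega) (by omega)) ?_)
      apply minor3_binomRow_nonneg h₁₂ h₂₃ <;> omega

/-- Exchanging the initial exponents of the last two rows, when the middle one is longer. -/
theorem sum_exchange_right_bottom_nonneg (h₁₂ : e₂ < e₁) (h₂₃ : e₃ < e₂) {s n m : ℤ}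
    (hn : 0 ≤ n) (hm : 0 ≤ m) (d : ℕ) (a b : ℤ) (hs : b + 1 ≤ s) (hsn : b + 1 + m + d ≤ s + n) :
    0 ≤ ∑ p ∈ Finset.Icc a b, minor3 e₁ e₂ e₃ (binomRow s n) (binomRow p (m + d))
      (binomRow (a + b - p) m) := by
  induction d generalizing a with
  | zero =>
    refine (sum_Icc_int_eq_zero_of_antisymm _ a b fun p => ?_).ge
    rw [minor3_swap_right]
    simp
  | succ d ih =>
    rcases lt_or_ge b a with hab | hab
    · rw [Finset.Icc_eq_empty (by omega), Finset.sum_empty]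
    have step : ∀ p ∈ Finset.Icc a b,
        minor3 e₁ e₂ e₃ (binomRow s n) (binomRow p (m + (d + 1 : ℕ)))
          (binomRow (a + b - p) m) =
        minor3 e₁ e₂ e₃ (binomRow s n) (binomRow p (m + d)) (binomRow (a + b - p) m) +
        minor3 e₁ e₂ e₃ (binomRow s n) (binomRow (p + 1) (m + d))
          (binomRow (a + 1 + b - (p + 1)) m) := by
      intro p _
      rw [binomRow_pascal p _ (by omega), minor3_add_mid]
      push_cast
      ring_nf
    rw [Finset.sum_congr rfl step, Finset.sum_add_distrib,
      sum_Icc_int_shift (fun p => minor3 e₁ e₂ e₃ (binomRow s n) (binomRow p (m + d))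
        (binomRow (a + 1 + b - p) m)), sum_Icc_int_succ_top _ (by omega)]
    refine add_nonneg (ih _ (by omega)) (add_nonneg (ih _ (by omega)) ?_)
    apply minor3_binomRow_nonneg h₁₂ h₂₃ <;> omega

/-- Exchanging the final exponents of the last two rows, when the last one is longer. -/
theorem sum_exchange_right_top_nonneg (h₁₂ : e₂ < e₁) (h₂₃ : e₃ < e₂) {s n m : ℤ}
    (hn : 0 ≤ n) (hm : 0 ≤ m) (d : ℕ) (a b : ℤ) (hs : b ≤ s) (hsn : b + m ≤ s + n) :
    0 ≤ ∑ p ∈ Finset.Icc a b, minor3 e₁ e₂ e₃ (binomRow s n) (binomRow p m)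
      (binomRow (a + b - p - d) (m + d)) := by
  induction d generalizing b with
  | zero =>
    refine (sum_Icc_int_eq_zero_of_antisymm _ a b fun p => ?_).ge
    rw [minor3_swap_right]
    simp
  | succ d ih =>
    rcases lt_or_ge b a with hab | hab
    · rw [Finset.Icc_eq_empty (by omega), Finset.sum_empty]
    have step : ∀ p ∈ Finset.Icc a b,
        minor3 e₁ e₂ e₃ (binomRow s n) (binomRow p m)
          (binomRow (a + b - p - (d + 1 : ℕ)) (m + (d + 1 : ℕ))) =
        minor3 e₁ e₂ e₃ (binomRow s n) (binomRow p m) (binomRow (a + b - p - d) (m + d)) +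
        minor3 e₁ e₂ e₃ (binomRow s n) (binomRow p m)
          (binomRow (a + (b - 1) - p - d) (m + d)) := by
      intro p _
      rw [binomRow_pascal _ (m + (d + 1 : ℕ)) (by omega), minor3_add_right]
      push_cast
      ring_nf
    have split := sum_Icc_int_succ_top (fun p => minor3 e₁ e₂ e₃ (binomRow s n) (binomRow p m)
      (binomRow (a + (b - 1) - p - d) (m + d))) (show a ≤ b - 1 + 1 by omega)
    rw [sub_add_cancel] at split
    rw [Finset.sum_congr rfl step, Finset.sum_add_distrib, split]
    refine add_nonneg (ih _ hs hsn) (add_nonneg (ih _ (by omega) (by omega)) ?_)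
    apply minor3_binomRow_nonneg h₁₂ h₂₃ <;> omega

end window

theorem det_M3 (lam1 lam2 lam3 mu1 mu2 mu3 i j k : ℤ) :
    (M3 lam1 lam2 lam3 mu1 mu2 mu3 i j k).det =
      minor3 mu1 (mu2 - 1) (mu3 - 2) (binomRow k (lam1 - k)) (binomRow (j - i - 1) (lam2 - j))
        (binomRow (-2 - (j + k) + i) lam3) := by
  rw [Matrix.det_fin_three]
  simp only [M3, minor3, binomRow, Matrix.of_apply, Matrix.cons_val]
  ring_nf

/-- The terms of the partial sum with `2 * i < j`, for fixed `i`. -/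
theorem sum_minor3_fixed_i_nonneg {e₁ e₂ e₃ lam1 lam2 lam3 f i : ℤ} (h₁₂ : e₂ < e₁)
    (h₂₃ : e₃ < e₂) (he₃ : -2 ≤ e₃) (hlam12 : lam2 ≤ lam1) (hlam23 : lam3 ≤ lam2)
    (hlam0 : 0 ≤ lam3) (hi : 0 ≤ i) :
    0 ≤ ∑ j ∈ Finset.Icc (max (2 * i + 1) (f - lam2)) (min lam3 (f - i)),
      minor3 e₁ e₂ e₃ (binomRow (f - j) (lam1 - (f - j))) (binomRow (j - i - 1) (lam2 - j))
        (binomRow (-2 - f + i) lam3) := by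
  rcases lt_or_ge lam3 (f - i) with hfi | hfi
  · refine (Finset.sum_eq_zero fun j _ => ?_).ge
    have vanish : ∀ e, -2 ≤ e → binomRow (-2 - f + i) lam3 e = 0 := fun e he => by
      unfold binomRow ichoose
      rw [if_neg (by omega)]
    simp [minor3, vanish e₁ (by omega), vanish e₂ (by omega), vanish e₃ he₃]
  · rw [max_eq_left (by omega), min_eq_right hfi]
    rcases lt_or_ge (f - i) (2 * i + 1) with hemp | hemp
    · rw [Finset.Icc_eq_empty (by omega), Finset.sum_empty]
    rw [sum_Icc_int_reflect _ f]
    have key := sum_exchange_left_nonneg h₁₂ h₂₃ (D := lam2 - i - 1) (c := -2 - f + i) hlam0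
      (by omega) (lam1 - lam2 + i + 1).toNat i (f - 2 * i - 1) (by omega) (by omega)
    rw [Int.toNat_of_nonneg (by omega)] at key
    refine key.trans_eq (Finset.sum_congr ?_ fun p _ => ?_)
    · congr 1 <;> ring
    · congr 2 <;> ring

/-- The terms of the partial sum with `j ≤ 2 * i`, for fixed `j`. -/
theorem sum_minor3_fixed_j_nonneg {e₁ e₂ e₃ lam1 lam2 lam3 f j : ℤ} (h₁₂ : e₂ < e₁)
    (h₂₃ : e₃ < e₂) (hlam12 : lam2 ≤ lam1) (hlam23 : lam3 ≤ lam2)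
    (hlam0 : 0 ≤ lam3) (hj : 0 ≤ j) (hj3 : j ≤ lam3) (hjf : j ≤ f) (hfj : f - j ≤ lam2) :
    0 ≤ ∑ i ∈ Finset.Icc 0 (f - j) with j ≤ 2 * i,
      minor3 e₁ e₂ e₃ (binomRow (f - j) (lam1 - (f - j))) (binomRow (j - i - 1) (lam2 - j))
        (binomRow (-2 - f + i) lam3) := by
  rw [← Finset.sum_filter_add_sum_filter_not _ (fun i => i ≤ 2 * j ∧ i ≤ j + lam2 - lam3)]
  refine add_nonneg (Finset.sum_nonneg fun i hi => ?_) ?_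
  · simp only [Finset.mem_filter, Finset.mem_Icc] at hi
    apply minor3_binomRow_nonneg h₁₂ h₂₃ <;> omega
  rcases le_or_gt lam3 (lam2 - j) with hlong | hlong
  · have hset : {i ∈ {i ∈ Finset.Icc 0 (f - j) | j ≤ 2 * i} |
        ¬(i ≤ 2 * j ∧ i ≤ j + lam2 - lam3)} = Finset.Icc (2 * j + 1) (f - j) := by
      ext i; simp only [Finset.mem_filter, Finset.mem_Icc]; omega
    rw [hset, sum_Icc_int_reflect _ (j - 1)]
    have key := sum_exchange_right_bottom_nonneg h₁₂ h₂₃ (s := f - j) (n := lam1 - (f - j))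
      (by omega) hlam0 (lam2 - j - lam3).toNat (2 * j - f - 1) (-j - 2) (by omega) (by omega)
    rw [Int.toNat_of_nonneg (by omega)] at key
    refine key.trans_eq (Finset.sum_congr ?_ fun p _ => ?_)
    · congr 1 <;> ring
    · congr 2 <;> ring
  · have hset : {i ∈ {i ∈ Finset.Icc 0 (f - j) | j ≤ 2 * i} |
        ¬(i ≤ 2 * j ∧ i ≤ j + lam2 - lam3)} = Finset.Icc (j + lam2 - lam3 + 1) (f - j) := by
      ext i; simp only [Finset.mem_filter, Finset.mem_Icc]; omega
    rw [hset, sum_Icc_int_reflect _ (j - 1)]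
    have key := sum_exchange_right_top_nonneg h₁₂ h₂₃ (s := f - j) (n := lam1 - (f - j))
      (m := lam2 - j) (by omega) (by omega) (lam3 - (lam2 - j)).toNat (2 * j - f - 1)
      (lam3 - lam2 - 2) (by omega) (by omega)
    rw [Int.toNat_of_nonneg (by omega)] at key
    refine key.trans_eq (Finset.sum_congr ?_ fun p _ => ?_)
    · congr 1 <;> ring
    · congr 2 <;> ring

theorem partial_sum_nonneg_p3
    (lam1 lam2 lam3 mu1 mu2 mu3 f : ℤ)
    (hlam12 : lam2 ≤ lam1) (hlam23 : lam3 ≤ lam2) (hlam0 : 0 ≤ lam3)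
    (hmu12 : mu2 ≤ mu1) (hmu23 : mu3 ≤ mu2) (hmu0 : 0 ≤ mu3)
    (hmu1 : mu1 ≤ lam1)
    (hf0 : 0 ≤ f) (hf : f ≤ lam2 + lam3) :
    0 ≤ ∑ k ∈ Finset.Icc (0 : ℤ) lam2, ∑ i ∈ Finset.Icc (0 : ℤ) k,
          ∑ j ∈ Finset.Icc (0 : ℤ) lam3,
            if j + k = f then (M3 lam1 lam2 lam3 mu1 mu2 mu3 i j k).det else 0 := by
  have h₁₂ : mu2 - 1 < mu1 := by omega
  have h₂₃ : mu3 - 2 < mu2 - 1 := by omega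
  set T : ℤ → ℤ → ℤ := fun i j => minor3 mu1 (mu2 - 1) (mu3 - 2)
    (binomRow (f - j) (lam1 - (f - j))) (binomRow (j - i - 1) (lam2 - j))
    (binomRow (-2 - f + i) lam3) with hT
  set J := Finset.Icc (max 0 (f - lam2)) (min lam3 f) with hJ
  have collapse : ∑ k ∈ Finset.Icc (0 : ℤ) lam2, ∑ i ∈ Finset.Icc (0 : ℤ) k,
      ∑ j ∈ Finset.Icc (0 : ℤ) lam3,
        (if j + k = f then (M3 lam1 lam2 lam3 mu1 mu2 mu3 i j k).det else 0) =
      ∑ j ∈ J, ∑ i ∈ Finset.Icc 0 (f - j), T i j := by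
    have inner : ∀ k ∈ Finset.Icc (0 : ℤ) lam2, (∑ i ∈ Finset.Icc (0 : ℤ) k,
        ∑ j ∈ Finset.Icc (0 : ℤ) lam3,
          if j + k = f then (M3 lam1 lam2 lam3 mu1 mu2 mu3 i j k).det else 0) =
        if f - k ∈ Finset.Icc 0 lam3 then ∑ i ∈ Finset.Icc 0 k, T i (f - k) else 0 := by
      intro k _
      have hk : ∀ j, (j + k = f) = (j = f - k) := fun j => by
        rw [eq_sub_iff_add_eq]
      simp only [hk, Finset.sum_ite_eq']
      split_ifs
      · refine Finset.sum_congr rfl fun i _ => ?_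
        rw [det_M3, hT]
        simp only [sub_sub_cancel, sub_add_cancel]
      · simp
    rw [Finset.sum_congr rfl inner, ← Finset.sum_filter]
    refine Finset.sum_nbij' (fun k => f - k) (fun j => f - j) ?_ ?_ ?_ ?_ ?_ <;>
      intro k hk <;> simp only [hJ, Finset.mem_filter, Finset.mem_Icc, sub_sub_cancel] at * <;>
      omega
  rw [collapse]
  have split : ∀ j ∈ J, ∑ i ∈ Finset.Icc 0 (f - j), T i j =
      ∑ i ∈ Finset.Icc 0 (f - j) with j ≤ 2 * i, T i j +
        ∑ i ∈ Finset.Icc 0 (f - j) with ¬ j ≤ 2 * i, T i j := fun j _ =>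
    (Finset.sum_filter_add_sum_filter_not _ _ _).symm
  rw [Finset.sum_congr rfl split, Finset.sum_add_distrib]
  refine add_nonneg (Finset.sum_nonneg fun j hj => ?_) ?_
  · simp only [hJ, Finset.mem_Icc] at hj
    exact sum_minor3_fixed_j_nonneg h₁₂ h₂₃ hlam12 hlam23 hlam0 (by omega) (by omega) (by omega)
      (by omega)
  · rw [Finset.sum_comm' (t' := Finset.Icc 0 f)
      (s' := fun i => Finset.Icc (max (2 * i + 1) (f - lam2)) (min lam3 (f - i)))]
    · refine Finset.sum_nonneg fun i hi => ?_
      rw [Finset.mem_Icc] at hi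
      exact sum_minor3_fixed_i_nonneg h₁₂ h₂₃ (by omega) hlam12 hlam23 hlam0 hi.1
    · intro j i
      simp only [hJ, Finset.mem_filter, Finset.mem_Icc]
      omega
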